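/- Under Assumption 1, for each i ∈ [m] the causal Markov boundary of X_i is unique: if A and B are both minimum-cardinality causal Markov blankets of X_i, then A = B. (Equivalently, the minimal generative model of the joint distribution is unique.) -/

import Mathlib

open Finset

/-- Probability of an event under the probability mass function `p` on a finite space. -/
noncomputable def pr {Ω : Type} [Fintype Ω] (p : Ω → ℝ) (E : Set Ω) : ℝ :=
  ∑ ω : Ω, E.indicator p ω

/-- Shannon conditional mutual information `I(A ; B | C)` of finite-valued random variables
on a finite probability space with pmf `p` (terms with vanishing probability contribute `0`,
by the conventions `Real.log 0 = 0`, `x / 0 = 0`). -/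
noncomputable def cmi {Ω α β γ : Type} [Fintype Ω] [Fintype α] [Fintype β] [Fintype γ]
    (p : Ω → ℝ) (A : Ω → α) (B : Ω → β) (C : Ω → γ) : ℝ :=
  ∑ a : α, ∑ b : β, ∑ c : γ,
    pr p {ω | A ω = a ∧ B ω = b ∧ C ω = c} *
      Real.log (pr p {ω | A ω = a ∧ B ω = b ∧ C ω = c} * pr p {ω | C ω = c} /
        (pr p {ω | A ω = a ∧ C ω = c} * pr p {ω | B ω = b ∧ C ω = c}))

/-- `A` and `B` are conditionally independent given `C` (under the pmf `p`). -/
def CondIndep {Ω α β γ : Type} [Fintype Ω] (p : Ω → ℝ)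
    (A : Ω → α) (B : Ω → β) (C : Ω → γ) : Prop :=
  ∀ (a : α) (b : β) (c : γ),
    pr p {ω | A ω = a ∧ B ω = b ∧ C ω = c} * pr p {ω | C ω = c}
      = pr p {ω | A ω = a ∧ C ω = c} * pr p {ω | B ω = b ∧ C ω = c}

/-- Trajectories of `m` processes over `n` time steps with alphabet `𝒳`:
`ω i j` is the value of process `i` at (0-indexed) time `j`. -/
abbrev Traj (m n : ℕ) (𝒳 : Type) := Fin m → Fin n → 𝒳

/-- The past `X_S^{j-1}`: the values of the processes in `S` at times strictly before `j`;
all other entries are masked by `none`. -/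
def past {m n : ℕ} {𝒳 : Type} (S : Finset (Fin m)) (j : Fin n) (ω : Traj m n 𝒳) :
    Fin m → Fin n → Option 𝒳 :=
  fun k t => if k ∈ S ∧ t < j then some (ω k t) else none

/-- Causally conditioned directed information
`I(X_S → X_i ‖ X_T) := Σ_{j=1}^{n} I(X_S^{j-1} ; X_{i,j} | X_i^{j-1}, X_T^{j-1})`. -/
noncomputable def di {m n : ℕ} {𝒳 : Type} [Fintype 𝒳] [DecidableEq 𝒳]
    (p : Traj m n 𝒳 → ℝ) (S : Finset (Fin m)) (i : Fin m) (T : Finset (Fin m)) : ℝ :=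
  ∑ j : Fin n,
    cmi p (past S j) (fun ω => ω i j) (fun ω => (past {i} j ω, past T j ω))

/-- Assumption 1: the joint distribution is strictly positive (and is a pmf), and at each
time `j` the variables `X_{1,j}, …, X_{m,j}` are mutually conditionally independent given
the full past `X_{[m]}^{j-1}` (stated in the division-free form
`P(joint ∧ past) · P(past)^{m-1} = Π_i P(X_{i,j} = x_i ∧ past)`). -/
def Assumption1 {m n : ℕ} {𝒳 : Type} [Fintype 𝒳] [DecidableEq 𝒳]
    (p : Traj m n 𝒳 → ℝ) : Prop :=
  (∀ ω, 0 < p ω) ∧ (∑ ω : Traj m n 𝒳, p ω = 1) ∧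
    ∀ (j : Fin n) (x : Fin m → 𝒳) (h : Fin m → Fin n → Option 𝒳),
      pr p {ω | (∀ i, ω i j = x i) ∧ past Finset.univ j ω = h} *
          pr p {ω | past Finset.univ j ω = h} ^ (m - 1)
        = ∏ i : Fin m, pr p {ω | ω i j = x i ∧ past Finset.univ j ω = h}

/-- `S ⊆ [m]∖{i}` is a causal Markov blanket of `X_i` if
`I(X_{[m]∖({i}∪S)} → X_i ‖ X_S) = 0`. -/
def IsCausalBlanket {m n : ℕ} {𝒳 : Type} [Fintype 𝒳] [DecidableEq 𝒳]
    (p : Traj m n 𝒳 → ℝ) (i : Fin m) (S : Finset (Fin m)) : Prop :=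
  S ⊆ Finset.univ.erase i ∧ di p (Finset.univ.erase i \ S) i S = 0

/-- A causal Markov boundary `A(i)` of `X_i` is a causal Markov blanket of minimum
cardinality. -/
def IsCausalBoundary {m n : ℕ} {𝒳 : Type} [Fintype 𝒳] [DecidableEq 𝒳]
    (p : Traj m n 𝒳 → ℝ) (i : Fin m) (A : Finset (Fin m)) : Prop :=
  IsCausalBlanket p i A ∧
    ∀ B : Finset (Fin m), IsCausalBlanket p i B → A.card ≤ B.card

section Probability

variable {Ω : Type} [Fintype Ω] {p : Ω → ℝ}

theorem pr_nonneg (hp : ∀ ω, 0 ≤ p ω) (E : Set Ω) : 0 ≤ pr p E :=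
  Finset.sum_nonneg fun ω _ => Set.indicator_nonneg (fun x _ => hp x) ω

theorem pr_mono (hp : ∀ ω, 0 ≤ p ω) {E F : Set Ω} (h : E ⊆ F) : pr p E ≤ pr p F :=
  Finset.sum_le_sum fun ω _ => Set.indicator_le_indicator_of_subset h hp ω

theorem pr_pos (hp : ∀ ω, 0 < p ω) {E : Set Ω} {ω : Ω} (h : ω ∈ E) : 0 < pr p E :=
  Finset.sum_pos' (fun x _ => Set.indicator_nonneg (fun x _ => (hp x).le) x)
    ⟨ω, Finset.mem_univ ω, by simpa [Set.indicator_of_mem h] using hp ω⟩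

/-- Law of total probability over the values of a random variable. -/
theorem sum_pr_eq_and {α : Type} [Fintype α] (A : Ω → α) (Q : Ω → Prop) :
    ∑ a : α, pr p {ω | A ω = a ∧ Q ω} = pr p {ω | Q ω} := by
  classical
  unfold pr
  rw [Finset.sum_comm]
  refine Finset.sum_congr rfl fun ω _ => ?_
  by_cases hQ : Q ω <;> simp [Set.indicator_apply, hQ]

variable {α β γ : Type}

theorem sub_div_le_mul_log {t c x y : ℝ} (ht : 0 < t) (hc : 0 < c) (hx : 0 < x) (hy : 0 < y) :
    t - x * y / c ≤ t * Real.log (t * c / (x * y)) ∧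
      (t * Real.log (t * c / (x * y)) = t - x * y / c → t * c = x * y) := by
  have hr : 0 < x * y / (t * c) := by positivity
  have hlog : Real.log (t * c / (x * y)) = -Real.log (x * y / (t * c)) := by
    rw [← Real.log_inv, inv_div]
  have hsplit : t - x * y / c = t * (1 - x * y / (t * c)) := by field_simp
  rw [hlog, hsplit]
  refine ⟨mul_le_mul_of_nonneg_left (by linarith [Real.log_le_sub_one_of_pos hr]) ht.le,
    fun h => ?_⟩
  have h' := mul_left_cancel₀ ht.ne' h
  by_contra hne
  have hr1 : x * y / (t * c) ≠ 1 := by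
    rw [Ne, div_eq_one_iff_eq (by positivity)]
    exact fun h => hne h.symm
  linarith [Real.log_lt_sub_one_of_pos hr hr1]

/-- The termwise Gibbs inequality for conditional mutual information, with its equality case. -/
theorem cmi_term_bound (hp : ∀ ω, 0 ≤ p ω) (A : Ω → α) (B : Ω → β) (C : Ω → γ)
    (a : α) (b : β) (c : γ) :
    let t := pr p {ω | A ω = a ∧ B ω = b ∧ C ω = c}
    let z := pr p {ω | C ω = c}
    let x := pr p {ω | A ω = a ∧ C ω = c}
    let y := pr p {ω | B ω = b ∧ C ω = c}
    t - x * y / z ≤ t * Real.log (t * z / (x * y)) ∧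
      (t * Real.log (t * z / (x * y)) = t - x * y / z → t * z = x * y) := by
  intro t z x y
  have hx0 : 0 ≤ x := pr_nonneg hp _
  have hy0 : 0 ≤ y := pr_nonneg hp _
  have hz0 : 0 ≤ z := pr_nonneg hp _
  have htx : t ≤ x := pr_mono hp fun ω h => ⟨h.1, h.2.2⟩
  have hty : t ≤ y := pr_mono hp fun ω h => h.2
  have hxz : x ≤ z := pr_mono hp fun ω h => h.2
  have ht0 : 0 ≤ t := pr_nonneg hp _
  rcases ht0.eq_or_lt with ht | ht
  · rw [← ht]
    have : 0 ≤ x * y / z := by positivity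
    refine ⟨by linarith, fun h => ?_⟩
    have h0 : x * y / z = 0 := by linarith
    rcases div_eq_zero_iff.mp h0 with h0 | h0
    · rw [h0, zero_mul]
    · rw [show x = 0 by linarith]
      ring
  · exact sub_div_le_mul_log ht (by linarith) (by linarith) (by linarith)

/-- Conditional independence means that the conditional law of `B` given `(A, C)` does not
depend on `A`. -/
theorem condIndep_iff_cross [Fintype α] (hp : ∀ ω, 0 ≤ p ω) (A : Ω → α) (B : Ω → β) (C : Ω → γ) :
    CondIndep p A B C ↔ ∀ a a' b c,
      pr p {ω | A ω = a ∧ B ω = b ∧ C ω = c} * pr p {ω | A ω = a' ∧ C ω = c} =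
        pr p {ω | A ω = a' ∧ B ω = b ∧ C ω = c} * pr p {ω | A ω = a ∧ C ω = c} := by
  constructor
  · intro h a a' b c
    have hle : ∀ a, pr p {ω | A ω = a ∧ C ω = c} ≤ pr p {ω | C ω = c} := fun a =>
      pr_mono hp fun ω h => h.2
    rcases (pr_nonneg hp {ω | C ω = c}).eq_or_lt with h0 | h0
    · rw [← h0] at hle
      rw [le_antisymm (hle a) (pr_nonneg hp _), le_antisymm (hle a') (pr_nonneg hp _)]
      simp
    · refine mul_right_cancel₀ h0.ne' ?_
      linear_combination pr p {ω | A ω = a' ∧ C ω = c} * h a b c -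
        pr p {ω | A ω = a ∧ C ω = c} * h a' b c
  · intro h a b c
    have := Finset.sum_congr (rfl : (Finset.univ : Finset α) = Finset.univ)
      fun a' _ => h a a' b c
    rw [← Finset.mul_sum, ← Finset.sum_mul, sum_pr_eq_and, sum_pr_eq_and] at this
    rw [this, mul_comm]

variable [Fintype α] [Fintype β] [Fintype γ]

theorem sum_sub_product_eq_zero (A : Ω → α) (B : Ω → β) (C : Ω → γ) :
    ∑ a : α, ∑ b : β, ∑ c : γ, (pr p {ω | A ω = a ∧ B ω = b ∧ C ω = c} -
      pr p {ω | A ω = a ∧ C ω = c} * pr p {ω | B ω = b ∧ C ω = c} / pr p {ω | C ω = c}) = 0 := by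
  have hcomm : ∀ f : α → β → γ → ℝ,
      ∑ a, ∑ b, ∑ c, f a b c = ∑ c, ∑ b, ∑ a, f a b c := fun f => by
    rw [Finset.sum_comm, Finset.sum_congr rfl fun b _ => Finset.sum_comm, Finset.sum_comm]
  rw [hcomm]
  refine Finset.sum_eq_zero fun c _ => ?_
  simp_rw [Finset.sum_sub_distrib, ← Finset.sum_div, ← Finset.sum_mul, sum_pr_eq_and,
    ← Finset.mul_sum, sum_pr_eq_and]
  rw [mul_self_div_self, sub_self]

theorem cmi_nonneg (hp : ∀ ω, 0 ≤ p ω) (A : Ω → α) (B : Ω → β) (C : Ω → γ) :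
    0 ≤ cmi p A B C := by
  rw [← sum_sub_product_eq_zero (p := p) A B C]
  exact Finset.sum_le_sum fun a _ => Finset.sum_le_sum fun b _ => Finset.sum_le_sum fun c _ =>
    (cmi_term_bound hp A B C a b c).1

theorem cmi_eq_zero_iff_condIndep (hp : ∀ ω, 0 ≤ p ω) (A : Ω → α) (B : Ω → β) (C : Ω → γ) :
    cmi p A B C = 0 ↔ CondIndep p A B C := by
  constructor
  · intro h a b c
    have hle := fun a b c => (cmi_term_bound hp A B C a b c).1
    rw [← sum_sub_product_eq_zero (p := p) A B C] at h
    have ha := (Finset.sum_eq_sum_iff_of_le fun a _ => Finset.sum_le_sum fun b _ =>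
      Finset.sum_le_sum fun c _ => hle a b c).1 h.symm a (Finset.mem_univ a)
    have hb := (Finset.sum_eq_sum_iff_of_le fun b _ =>
      Finset.sum_le_sum fun c _ => hle a b c).1 ha b (Finset.mem_univ b)
    have hc := (Finset.sum_eq_sum_iff_of_le fun c _ => hle a b c).1 hb c (Finset.mem_univ c)
    exact (cmi_term_bound hp A B C a b c).2 hc.symm
  · intro h
    refine Finset.sum_eq_zero fun a _ => Finset.sum_eq_zero fun b _ =>
      Finset.sum_eq_zero fun c _ => ?_
    rw [h a b c]
    rcases eq_or_ne (pr p {ω | A ω = a ∧ C ω = c} * pr p {ω | B ω = b ∧ C ω = c}) 0 with h0 | h0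
    · simp [h0]
    · simp [div_self h0]

end Probability

section Blankets

variable {m n : ℕ} {𝒳 : Type}

theorem past_eq_iff {S : Finset (Fin m)} {j : Fin n} {ω ω' : Traj m n 𝒳} :
    past S j ω = past S j ω' ↔ ∀ k ∈ S, ∀ t < j, ω k t = ω' k t := by
  constructor
  · intro h k hk t ht
    simpa [past, hk, ht] using congrFun (congrFun h k) t
  · intro h
    funext k t
    by_cases hkt : k ∈ S ∧ t < j
    · simp [past, hkt, h k hkt.1 t hkt.2]
    · simp [past, hkt]

theorem past_univ_eq_iff {i : Fin m} {S : Finset (Fin m)} {j : Fin n} {ω ω' : Traj m n 𝒳} :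
    past Finset.univ j ω = past Finset.univ j ω' ↔
      past (Finset.univ.erase i \ S) j ω = past (Finset.univ.erase i \ S) j ω' ∧
        (past {i} j ω, past S j ω) = (past {i} j ω', past S j ω') := by
  simp only [Prod.mk.injEq, past_eq_iff, Finset.mem_univ, Finset.mem_sdiff, Finset.mem_erase,
    Finset.mem_singleton]
  grind

variable [Fintype 𝒳] [DecidableEq 𝒳]

/-- The conditional probability that `X_{i,j} = x` given that the full past agrees with `ω`. -/
noncomputable def transitionProb (p : Traj m n 𝒳 → ℝ) (i : Fin m) (j : Fin n) (x : 𝒳)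
    (ω : Traj m n 𝒳) : ℝ :=
  pr p {ω' | ω' i j = x ∧ past Finset.univ j ω' = past Finset.univ j ω} /
    pr p {ω' | past Finset.univ j ω' = past Finset.univ j ω}

theorem di_eq_zero_iff {p : Traj m n 𝒳 → ℝ} (hp : ∀ ω, 0 ≤ p ω) (S : Finset (Fin m))
    (i : Fin m) (T : Finset (Fin m)) :
    di p S i T = 0 ↔ ∀ j : Fin n, CondIndep p (past S j) (fun ω => ω i j)
      (fun ω => (past {i} j ω, past T j ω)) := by
  unfold di
  rw [Finset.sum_eq_zero_iff_of_nonneg fun j _ => cmi_nonneg hp _ _ _]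
  simp [cmi_eq_zero_iff_condIndep hp]

/-- A causal Markov blanket is a set whose past, with that of `X_i`, determines the transition
probabilities of `X_i`. -/
theorem isCausalBlanket_iff {p : Traj m n 𝒳 → ℝ} (hp : ∀ ω, 0 < p ω) (i : Fin m)
    (S : Finset (Fin m)) :
    IsCausalBlanket p i S ↔ S ⊆ Finset.univ.erase i ∧
      ∀ (j : Fin n) (x : 𝒳) (ω ω' : Traj m n 𝒳), past {i} j ω = past {i} j ω' →
        past S j ω = past S j ω' → transitionProb p i j x ω = transitionProb p i j x ω' := by
  have hp0 := fun ω => (hp ω).le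
  unfold IsCausalBlanket
  rw [di_eq_zero_iff hp0]
  refine and_congr_right fun _ => forall_congr' fun j => ?_
  rw [condIndep_iff_cross hp0]
  have hjoint : ∀ (x : 𝒳) (ω : Traj m n 𝒳),
      {ω' : Traj m n 𝒳 | past (Finset.univ.erase i \ S) j ω' = past (Finset.univ.erase i \ S) j ω ∧
        ω' i j = x ∧ (past {i} j ω', past S j ω') = (past {i} j ω, past S j ω)} =
      {ω' | ω' i j = x ∧ past Finset.univ j ω' = past Finset.univ j ω} := fun x ω => by
    ext ω'
    simp only [Set.mem_ofPred_eq, past_univ_eq_iff (i := i) (S := S)]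
    tauto
  have hpast : ∀ ω : Traj m n 𝒳,
      {ω' : Traj m n 𝒳 | past (Finset.univ.erase i \ S) j ω' = past (Finset.univ.erase i \ S) j ω ∧
        (past {i} j ω', past S j ω') = (past {i} j ω, past S j ω)} =
      {ω' | past Finset.univ j ω' = past Finset.univ j ω} := fun ω => by
    ext ω'
    simp only [Set.mem_ofPred_eq, past_univ_eq_iff (i := i) (S := S)]
  have hpos : ∀ ω : Traj m n 𝒳,
      0 < pr p {ω' | past Finset.univ j ω' = past Finset.univ j ω} := fun ω =>
    pr_pos hp (ω := ω) rfl
  constructor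
  · intro h x ω ω' hi hS
    have hcross := h (past (Finset.univ.erase i \ S) j ω) (past (Finset.univ.erase i \ S) j ω') x
      (past {i} j ω, past S j ω)
    rw [hjoint, hpast, hi, hS, hjoint, hpast] at hcross
    exact (div_eq_div_iff (hpos ω).ne' (hpos ω').ne').2 hcross
  · intro h a a' x c
    have hnull : ∀ a, (¬ ∃ ω : Traj m n 𝒳, past (Finset.univ.erase i \ S) j ω = a ∧
        (past {i} j ω, past S j ω) = c) →
        pr p {ω | past (Finset.univ.erase i \ S) j ω = a ∧ (past {i} j ω, past S j ω) = c} = 0 ∧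
        pr p {ω | past (Finset.univ.erase i \ S) j ω = a ∧ ω i j = x ∧
          (past {i} j ω, past S j ω) = c} = 0 := fun a ha => by
      constructor <;> refine Finset.sum_eq_zero fun ω _ => Set.indicator_of_notMem ?_ p
      · exact fun hω => ha ⟨ω, hω⟩
      · exact fun hω => ha ⟨ω, hω.1, hω.2.2⟩
    by_cases ha : ∃ ω : Traj m n 𝒳, past (Finset.univ.erase i \ S) j ω = a ∧
        (past {i} j ω, past S j ω) = c
    · by_cases ha' : ∃ ω : Traj m n 𝒳, past (Finset.univ.erase i \ S) j ω = a' ∧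
          (past {i} j ω, past S j ω) = c
      · obtain ⟨ω, rfl, rfl⟩ := ha
        obtain ⟨ω', rfl, hc⟩ := ha'
        have hc' := Prod.mk.inj hc
        have hcross := (div_eq_div_iff (hpos ω).ne' (hpos ω').ne').1
          (h x ω ω' hc'.1.symm hc'.2.symm)
        rw [hjoint, hpast, ← hc, hjoint, hpast]
        exact hcross
      · rw [(hnull a' ha').1, (hnull a' ha').2]
        ring
    · rw [(hnull a ha).1, (hnull a ha).2]
      ring

/-- Under strict positivity, causal Markov blankets are closed under intersection. -/
theorem IsCausalBlanket.inter {p : Traj m n 𝒳 → ℝ} (hp : ∀ ω, 0 < p ω) {i : Fin m}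
    {A B : Finset (Fin m)} (hA : IsCausalBlanket p i A) (hB : IsCausalBlanket p i B) :
    IsCausalBlanket p i (A ∩ B) := by
  rw [isCausalBlanket_iff hp] at *
  refine ⟨Finset.inter_subset_left.trans hA.1, fun j x ω ω' hi hS => ?_⟩
  let ν : Traj m n 𝒳 := fun k => if k ∈ A then ω k else ω' k
  have hiA : i ∉ A := fun h => by simpa using hA.1 h
  have hνi : past {i} j ν = past {i} j ω' := past_eq_iff.2 fun k hk t _ => by
    rw [Finset.mem_singleton.1 hk]
    simp [ν, hiA]
  have hνA : past A j ω = past A j ν := past_eq_iff.2 fun k hk t _ => by simp [ν, hk]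
  have hνB : past B j ν = past B j ω' := past_eq_iff.2 fun k hk t ht => by
    by_cases hkA : k ∈ A
    · simpa [ν, hkA] using past_eq_iff.1 hS k (Finset.mem_inter.2 ⟨hkA, hk⟩) t ht
    · simp [ν, hkA]
  exact (hA.2 j x ω ν (hi.trans hνi.symm) hνA).trans (hB.2 j x ν ω' hνi hνB)

end Blankets

/-- uniqueness of the causal Markov boundary / minimal generative model.
Under Assumption 1, any two minimum-cardinality causal Markov blankets of `X_i` coincide. -/
theorem stmt_5 {m n : ℕ} (hm : 2 ≤ m) (hn : 1 ≤ n)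
    {𝒳 : Type} [Fintype 𝒳] [DecidableEq 𝒳] [Nonempty 𝒳]
    (p : Traj m n 𝒳 → ℝ) (hp : Assumption1 p)
    (i : Fin m) (A B : Finset (Fin m))
    (hA : IsCausalBoundary p i A) (hB : IsCausalBoundary p i B) :
    A = B := by
  have hAB := hA.1.inter hp.1 hB.1
  exact (Finset.eq_of_subset_of_card_le Finset.inter_subset_left (hA.2 _ hAB)).symm.trans
    (Finset.eq_of_subset_of_card_le Finset.inter_subset_right (hB.2 _ hAB))
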